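/- arXiv:2511.04430 — 2 statements merged into one kernel-verified Lean document; each statement's English description precedes it below -/
import Mathlib

section
/- Let N be a positive integer and f, g ∈ R_N such that BB_N(f,g) is topological. Then the additive group of R_N ⧸ Ideal.span {f, g} is isomorphic to the direct product, over the prime factors p of N, of Q_p copies of ZMod (p^{k_p}), where k_p is the multiplicity of p in the prime factorization of N, and Q_p is the dimension of R_p ⧸ Ideal.span {f_p, g_p} as a vector space over ZMod p. (Consequently the anyon group C, the direct sum of two copies of such quotients, is isomorphic to the direct product of 2·Q_p copies of ZMod (p^{k_p}).) -/
/-- The Laurent polynomial ring `(ZMod N)[X^{±1}, Y^{±1}]`. -/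
abbrev RR (N : ℕ) : Type := AddMonoidAlgebra (ZMod N) (ℤ × ℤ)

/-- The code `BB_N(f,g)` is topological. -/
def IsTopological {N : ℕ} (f g : RR N) : Prop :=
  ∀ r s : RR N, r * f + s * g = 0 → ∃ h : RR N, r = h * g ∧ s = -(h * f)

/-- Coefficientwise reduction `R_N → R_p` modulo a divisor `p` of `N`. -/
noncomputable def red (N p : ℕ) (h : p ∣ N) : RR N →+* RR p :=
  AddMonoidAlgebra.liftNCRingHom
    ((AddMonoidAlgebra.singleZeroRingHom).comp (ZMod.castHom h (ZMod p)))
    (AddMonoidAlgebra.of (ZMod p) (ℤ × ℤ))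
    (fun _ _ => Commute.all _ _)

/-!
Exactness of the Koszul complex of `(f, g)` passes to flat extensions, and to quotients by `d` when
`(d, e)` is an exact pair of zero divisors. Over a Noetherian local ring it forces `(f, g)`, if
contained in the maximal ideal, to be a regular sequence. Hence every prime containing `f` and `g`
has height at least `2`; as `R_N` has dimension at most `2`, the quotient `R_N / (f, g)` is
zero-dimensional, and so finite over `ZMod N`.

When `N = p ^ k`, exactness also shows that the elements of `R_N / (f, g)` killed by `p` are the
multiples of `p ^ (k - 1)`. By the local criterion the quotient is then free over the local ring
`ZMod (p ^ k)`, and its rank can be computed modulo `p`. The Chinese remainder theorem handles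
general `N`.
-/

section Dimension

open scoped LaurentPolynomial

instance isNoetherianRing_addMonoidAlgebra {R M : Type*} [CommRing R] [IsNoetherianRing R]
    [AddCommMonoid M] [AddMonoid.FG M] : IsNoetherianRing (AddMonoidAlgebra R M) :=
  Algebra.FiniteType.isNoetherianRing R _

theorem ringKrullDim_le_of_isLocalization {R S : Type*} [CommRing R] [CommRing S] [Algebra R S]
    (M : Submonoid R) [IsLocalization M S] : ringKrullDim S ≤ ringKrullDim R := by
  refine (ringKrullDim_le_iff_height_le _).2 fun P hP => ?_
  rw [← IsLocalization.height_under M P]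
  exact Ideal.height_le_ringKrullDim_of_ne_top Ideal.IsPrime.ne_top'

theorem ringKrullDim_laurentPolynomial_le {R : Type*} [CommRing R] [IsNoetherianRing R] :
    ringKrullDim R[T;T⁻¹] ≤ ringKrullDim R + 1 :=
  Polynomial.ringKrullDim_of_isNoetherianRing (R := R) ▸
    ringKrullDim_le_of_isLocalization (Submonoid.powers Polynomial.X)

theorem ringKrullDim_addMonoidAlgebra_int_prod_int_le {R : Type*} [CommRing R]
    [IsNoetherianRing R] : ringKrullDim (AddMonoidAlgebra R (ℤ × ℤ)) ≤ ringKrullDim R + 2 :=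
  have : IsNoetherianRing R[T;T⁻¹] := isNoetherianRing_addMonoidAlgebra
  calc ringKrullDim (AddMonoidAlgebra R (ℤ × ℤ))
      = ringKrullDim R[T;T⁻¹][T;T⁻¹] := ringKrullDim_eq_of_ringEquiv AddMonoidAlgebra.curryRingEquiv
    _ ≤ ringKrullDim R[T;T⁻¹] + 1 := ringKrullDim_laurentPolynomial_le
    _ ≤ ringKrullDim R + 1 + 1 := by gcongr; exact ringKrullDim_laurentPolynomial_le
    _ = ringKrullDim R + 2 := by rw [add_assoc, one_add_one_eq_two]

end Dimension

section LocalRing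

open IsLocalRing
open scoped TensorProduct

theorem free_of_forall_smul_eq_zero {R M : Type*} [CommRing R] [IsLocalRing R] [AddCommGroup M]
    [Module R M] [Module.FinitePresentation R M] {d e : R} (hd : maximalIdeal R = Ideal.span {d})
    (hde : d * e = 0) (h : ∀ x : M, d • x = 0 → ∃ y, x = e • y) : Module.Free R M := by
  let δ : maximalIdeal R := ⟨d, hd ▸ Ideal.mem_span_singleton_self d⟩
  have exists_eq_tmul : ∀ t : maximalIdeal R ⊗[R] M, ∃ x : M, t = δ ⊗ₜ x := fun t => by
    induction t with
    | zero => exact ⟨0, (TensorProduct.tmul_zero _ _).symm⟩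
    | add s t hs ht =>
      obtain ⟨x, rfl⟩ := hs
      obtain ⟨y, rfl⟩ := ht
      exact ⟨x + y, (TensorProduct.tmul_add _ _ _).symm⟩
    | tmul a x =>
      obtain ⟨a, ha⟩ := a
      obtain ⟨c, rfl⟩ := Ideal.mem_span_singleton'.1 (hd ▸ ha)
      exact ⟨c • x, TensorProduct.smul_tmul c δ x⟩
  refine Module.free_of_maximalIdeal_rTensor_injective <|
    (injective_iff_map_eq_zero _).2 fun t ht => ?_
  obtain ⟨x, rfl⟩ := exists_eq_tmul t
  obtain ⟨y, rfl⟩ := h x (by simpa [δ] using congrArg (TensorProduct.lid R M) ht)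
  rw [← TensorProduct.smul_tmul, show e • δ = 0 from Subtype.ext ((mul_comm e d).trans hde),
    TensorProduct.zero_tmul]

theorem finrank_eq_of_ker_eq_map_maximalIdeal {R S K L : Type*} [CommRing R] [IsLocalRing R]
    [CommRing S] [Algebra R S] [Module.Free R S] [Module.Finite R S] [Field K] [CommRing L]
    [Algebra K L] {ρ : R →+* K} (hρ : Function.Surjective ρ) {π : S →+* L}
    (hπ : Function.Surjective π) (hcomm : (algebraMap K L).comp ρ = π.comp (algebraMap R S))
    (hker : RingHom.ker π = (maximalIdeal R).map (algebraMap R S)) :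
    Module.finrank K L = Module.finrank R S := by
  have hρ_ker : RingHom.ker ρ = maximalIdeal R :=
    eq_maximalIdeal (RingHom.ker_isMaximal_of_surjective ρ hρ)
  let i : R ⧸ maximalIdeal R ≃+* K :=
    (Ideal.quotEquivOfEq hρ_ker.symm).trans (RingHom.quotientKerEquivOfSurjective hρ)
  let j : S ⧸ (maximalIdeal R).map (algebraMap R S) ≃+* L :=
    (Ideal.quotEquivOfEq hker.symm).trans (RingHom.quotientKerEquivOfSurjective hπ)
  rw [← IsLocalRing.finrank_quotient_map (R := R) (S := S)]
  exact (Algebra.finrank_eq_of_equiv_equiv i j (Ideal.Quotient.ringHom_ext hcomm)).symm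

end LocalRing

section Kernels

variable {R S : Type*} [CommRing R] [CommRing S]

theorem ker_quotientMap_of_surjective {φ : R →+* S} (hφ : Function.Surjective φ) {I : Ideal R}
    {J : Ideal S} (hJ : I.map φ = J) :
    RingHom.ker (Ideal.quotientMap J φ (Ideal.map_le_iff_le_comap.1 hJ.le)) =
      (RingHom.ker φ).map (Ideal.Quotient.mk I) := by
  subst hJ
  apply Ideal.comap_injective_of_surjective _ (Ideal.Quotient.mk_surjective (I := I))
  rw [Ideal.comap_map_quotientMk, RingHom.comap_ker, Ideal.quotientMap_comp_mk, ← RingHom.comap_ker,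
    Ideal.mk_ker, Ideal.comap_map_of_surjective' _ hφ]

theorem ker_addMonoidAlgebra_mapRingHom (M : Type*) [AddMonoid M] (φ : R →+* S) :
    RingHom.ker (AddMonoidAlgebra.mapRingHom M φ) =
      (RingHom.ker φ).map AddMonoidAlgebra.singleZeroRingHom := by
  apply le_antisymm
  · intro x hx
    have hcoeff : ∀ m, x.coeff m ∈ RingHom.ker φ := fun m => by
      rw [RingHom.mem_ker, ← AddMonoidAlgebra.coeff_mapRingHom, RingHom.mem_ker.1 hx]
      rfl
    rw [← AddMonoidAlgebra.sum_coeff_single x]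
    refine Ideal.sum_mem _ fun m _ => ?_
    have hsingle : AddMonoidAlgebra.single m (x.coeff m) =
        AddMonoidAlgebra.single m 1 * AddMonoidAlgebra.singleZeroRingHom (x.coeff m) := by simp
    exact hsingle ▸ Ideal.mul_mem_left _ _ (Ideal.mem_map_of_mem _ (hcoeff m))
  · refine Ideal.map_le_iff_le_comap.2 fun c hc => ?_
    simpa using hc

end Kernels

/-- The Koszul complex `R → R² → R` of `(f, g)` is exact in the middle: every syzygy of `(f, g)` is
a multiple of the trivial one `(g, -f)`. -/
def KoszulExact {R : Type*} [CommRing R] (f g : R) : Prop :=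
  ∀ r s : R, r * f + s * g = 0 → ∃ h : R, r = h * g ∧ s = -(h * f)

/-- An exact pair of zero divisors: the annihilator of `d` is `(e)` and the annihilator of `e` is
`(d)`. The model case is `d * e = N` in `ZMod N`. -/
structure IsExactPair {R : Type*} [CommRing R] (d e : R) : Prop where
  mul_eq_zero : d * e = 0
  dvd_of_left_mul_eq_zero : ∀ x, d * x = 0 → e ∣ x
  dvd_of_right_mul_eq_zero : ∀ x, e * x = 0 → d ∣ x

section Flat

variable {R : Type*} (S : Type*) [CommRing R] [CommRing S] [Algebra R S] [Module.Flat R S]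

theorem KoszulExact.algebraMap_of_flat {f g : R} (hfg : KoszulExact f g) :
    KoszulExact (algebraMap R S f) (algebraMap R S g) := by
  intro r s hrs
  obtain ⟨n, a, y, hy, ha⟩ := Module.Flat.isTrivialRelation_of_sum_smul_eq_zero
    (f := ![f, g]) (x := ![r, s]) (by simpa [Algebra.smul_def, mul_comm] using hrs)
  choose h hg hf using fun j => hfg (a 0 j) (a 1 j)
    (by simpa [Fin.sum_univ_two, mul_comm] using ha j)
  have hr : r = ∑ j, a 0 j • y j := hy 0
  have hs : s = ∑ j, a 1 j • y j := hy 1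
  refine ⟨∑ j, h j • y j, ?_, ?_⟩
  · simp only [hr, hg, Finset.sum_mul, Algebra.smul_def, map_mul, mul_right_comm]
  · simp only [hs, hf, Finset.sum_mul, Algebra.smul_def, map_neg, map_mul, mul_right_comm, neg_mul,
      Finset.sum_neg_distrib]

variable {S} in
theorem dvd_of_algebraMap_mul_eq_zero {d e : R} (h : ∀ x : R, d * x = 0 → e ∣ x) {x : S}
    (hx : algebraMap R S d * x = 0) : algebraMap R S e ∣ x := by
  obtain ⟨n, a, y, hy, ha⟩ := Module.Flat.isTrivialRelation_of_sum_smul_eq_zero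
    (f := ![d]) (x := ![x]) (by simpa [Algebra.smul_def] using hx)
  have hxy : x = ∑ j, a 0 j • y j := hy 0
  rw [hxy]
  refine Finset.dvd_sum fun j _ => ?_
  rw [Algebra.smul_def]
  exact (map_dvd (algebraMap R S) (h (a 0 j) (by simpa using ha j))).mul_right _

theorem IsExactPair.algebraMap_of_flat {d e : R} (hde : IsExactPair d e) :
    IsExactPair (algebraMap R S d) (algebraMap R S e) where
  mul_eq_zero := by rw [← map_mul, hde.mul_eq_zero, map_zero]
  dvd_of_left_mul_eq_zero _ := dvd_of_algebraMap_mul_eq_zero hde.dvd_of_left_mul_eq_zero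
  dvd_of_right_mul_eq_zero _ := dvd_of_algebraMap_mul_eq_zero hde.dvd_of_right_mul_eq_zero

end Flat

namespace KoszulExact

section Noetherian

variable {R S : Type*} [CommRing R] [CommRing S] {f g d e : R}

theorem exists_sub_one_mem_and_mul_eq_zero [IsNoetherianRing R] (hfg : KoszulExact f g) :
    ∃ r : R, r - 1 ∈ Ideal.span {g} ∧ ∀ x, x * f = 0 → r * x = 0 := by
  let A : Ideal R := LinearMap.ker (LinearMap.mulRight R f)
  have mem_A : ∀ x, x ∈ A ↔ x * f = 0 := fun x => by simp [A]
  -- `x ∈ A` gives the syzygy `(x, 0)`, which is `y * (g, -f)` with `y * f = 0`.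
  have hA : A ≤ Ideal.span {g} • A := fun x hx => by
    obtain ⟨y, rfl, hy⟩ := hfg x 0 (by simpa using (mem_A x).1 hx)
    rw [mul_comm]
    exact Submodule.smul_mem_smul (Ideal.mem_span_singleton_self g)
      ((mem_A y).2 (neg_eq_zero.1 hy.symm))
  obtain ⟨r, hr, hr0⟩ := Submodule.exists_sub_one_mem_and_smul_eq_zero_of_fg_of_le_smul
    (Ideal.span {g}) A (IsNoetherian.noetherian A) hA
  exact ⟨r, hr, fun x hx => hr0 x ((mem_A x).2 hx)⟩

theorem eq_zero_of_mul_eq_zero [IsNoetherianRing R] (hfg : KoszulExact f g) {x : R}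
    (hf : x * f = 0) (hg : x * g = 0) : x = 0 := by
  obtain ⟨r, hr, hr0⟩ := hfg.exists_sub_one_mem_and_mul_eq_zero
  obtain ⟨t, ht⟩ := Ideal.mem_span_singleton.1 hr
  linear_combination hr0 x hf - x * ht - t * hg

theorem exists_of_mul_eq [IsNoetherianRing R] (hfg : KoszulExact f g) (hde : IsExactPair d e)
    {x a b : R} (hx : d * x = a * f + b * g) :
    ∃ h a' b' y, a = h * g + d * a' ∧ b = -(h * f) + d * b' ∧ x = a' * f + b' * g + e * y := by
  -- `e * (a, b)` is a syzygy `h * (g, -f)`, and `d * h` kills both `f` and `g`.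
  obtain ⟨h, ha, hb⟩ := hfg (e * a) (e * b)
    (by linear_combination x * hde.mul_eq_zero - e * hx)
  obtain ⟨h', rfl⟩ := hde.dvd_of_left_mul_eq_zero h <| hfg.eq_zero_of_mul_eq_zero
    (by linear_combination d * hb - b * hde.mul_eq_zero)
    (by linear_combination a * hde.mul_eq_zero - d * ha)
  obtain ⟨a', ha'⟩ := hde.dvd_of_right_mul_eq_zero (a - h' * g) (by linear_combination ha)
  obtain ⟨b', hb'⟩ := hde.dvd_of_right_mul_eq_zero (b + h' * f) (by linear_combination hb)
  obtain ⟨y, hy⟩ := hde.dvd_of_left_mul_eq_zero (x - (a' * f + b' * g))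
    (by linear_combination hx + f * ha' + g * hb')
  exact ⟨h', a', b', y, by linear_combination ha', by linear_combination hb',
    by linear_combination hy⟩

theorem map_of_ker_eq_span [IsNoetherianRing R] (hfg : KoszulExact f g) (hde : IsExactPair d e)
    {φ : R →+* S} (hφ : Function.Surjective φ) (hker : RingHom.ker φ = Ideal.span {d}) :
    KoszulExact (φ f) (φ g) := by
  intro r s hrs
  obtain ⟨r, rfl⟩ := hφ r
  obtain ⟨s, rfl⟩ := hφ s
  have hd : φ d = 0 := RingHom.mem_ker.1 (hker ▸ Ideal.mem_span_singleton_self d)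
  have hmem : r * f + s * g ∈ RingHom.ker φ := by simpa [RingHom.mem_ker] using hrs
  obtain ⟨x, hx⟩ := Ideal.mem_span_singleton.1 (hker ▸ hmem)
  obtain ⟨h, a, b, -, rfl, rfl, -⟩ := hfg.exists_of_mul_eq hde hx.symm
  exact ⟨φ h, by simp [hd], by simp [hd]⟩

theorem mk_dvd_of_mk_mul_eq_zero [IsNoetherianRing R] (hfg : KoszulExact f g)
    (hde : IsExactPair d e) {x : R ⧸ Ideal.span {f, g}} (hx : Ideal.Quotient.mk _ d * x = 0) :
    Ideal.Quotient.mk _ e ∣ x := by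
  obtain ⟨x, rfl⟩ := Ideal.Quotient.mk_surjective x
  rw [← map_mul, Ideal.Quotient.eq_zero_iff_mem] at hx
  obtain ⟨a, b, hab⟩ := Ideal.mem_span_pair.1 hx
  obtain ⟨-, a', b', y, -, -, rfl⟩ := hfg.exists_of_mul_eq hde hab.symm
  have hmem : a' * f + b' * g ∈ Ideal.span {f, g} := Ideal.mem_span_pair.2 ⟨a', b', rfl⟩
  rw [map_add, Ideal.Quotient.eq_zero_iff_mem.2 hmem, zero_add, map_mul]
  exact dvd_mul_right _ _

open IsLocalRing

theorem mk_mem_nonZeroDivisors (hfg : KoszulExact f g) :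
    Ideal.Quotient.mk (Ideal.span {f}) g ∈ nonZeroDivisors (R ⧸ Ideal.span {f}) := by
  refine mem_nonZeroDivisors_iff_right.2 fun s hs => ?_
  obtain ⟨s, rfl⟩ := Ideal.Quotient.mk_surjective s
  rw [← map_mul, Ideal.Quotient.eq_zero_iff_dvd] at hs
  obtain ⟨r, hr⟩ := hs
  obtain ⟨h, -, rfl⟩ := hfg (-r) s (by linear_combination hr)
  exact Ideal.Quotient.eq_zero_iff_dvd .. |>.2 (dvd_neg.2 (dvd_mul_left f h))

theorem mem_nonZeroDivisors_of_mem_maximalIdeal [IsNoetherianRing R] [IsLocalRing R]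
    (hfg : KoszulExact f g) (hg : g ∈ maximalIdeal R) : f ∈ nonZeroDivisors R := by
  obtain ⟨r, hr, hr0⟩ := hfg.exists_sub_one_mem_and_mul_eq_zero
  have hr_mem : r - 1 ∈ maximalIdeal R := (Ideal.span_singleton_le_iff_mem _).2 hg hr
  have hr_unit : IsUnit r := by
    simpa using isUnit_one_sub_self_of_mem_nonunits (1 - r)
      ((mem_maximalIdeal _).1 (by simpa using neg_mem hr_mem))
  exact mem_nonZeroDivisors_iff_right.2 fun x hx => hr_unit.mul_right_eq_zero.1 (hr0 x hx)

theorem two_le_ringKrullDim [IsNoetherianRing R] [IsLocalRing R] (hfg : KoszulExact f g)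
    (hf : f ∈ maximalIdeal R) (hg : g ∈ maximalIdeal R) : 2 ≤ ringKrullDim R := by
  have hf_reg := hfg.mem_nonZeroDivisors_of_mem_maximalIdeal hg
  let φ : R ⧸ Ideal.span {f} →+* ResidueField R :=
    Ideal.Quotient.factor ((Ideal.span_singleton_le_iff_mem _).2 hf)
  calc (2 : WithBot ℕ∞) = ringKrullDim (ResidueField R) + 1 + 1 := by
        rw [ringKrullDim_eq_zero_of_field]; norm_num
    _ ≤ ringKrullDim (R ⧸ Ideal.span {f}) + 1 := by
        gcongr
        exact ringKrullDim_succ_le_of_surjective φ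
          (Ideal.Quotient.factor_surjective _) (hfg.mk_mem_nonZeroDivisors)
          (Ideal.Quotient.eq_zero_iff_mem.2 hg)
    _ ≤ ringKrullDim R := ringKrullDim_quotient_succ_le_of_nonZeroDivisor hf_reg

theorem two_le_height [IsNoetherianRing R] (hfg : KoszulExact f g) {P : Ideal R} [P.IsPrime]
    (hf : f ∈ P) (hg : g ∈ P) : 2 ≤ P.height := by
  have mem_max : ∀ x ∈ P, algebraMap R (Localization.AtPrime P) x ∈ maximalIdeal _ := fun x hx =>
    (IsLocalization.AtPrime.to_map_mem_maximal_iff _ P x).2 hx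
  have : Module.Flat R (Localization.AtPrime P) := IsLocalization.flat _ P.primeCompl
  have h := (hfg.algebraMap_of_flat (Localization.AtPrime P)).two_le_ringKrullDim
    (mem_max f hf) (mem_max g hg)
  rw [IsLocalization.AtPrime.ringKrullDim_eq_height P] at h
  exact WithBot.coe_le_coe.1 h

theorem krullDimLE_zero_quotient [IsNoetherianRing R] (hfg : KoszulExact f g)
    (hdim : ringKrullDim R ≤ 2) : Ring.KrullDimLE 0 (R ⧸ Ideal.span {f, g}) := by
  refine .mk₀ fun P hP => ?_
  let Q := P.comap (Ideal.Quotient.mk (Ideal.span {f, g}))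
  have hle : Ideal.span {f, g} ≤ Q := Ideal.le_comap_of_map_le (by simp)
  have hQ : 2 ≤ Q.height :=
    hfg.two_le_height (hle (Ideal.subset_span (by simp))) (hle (Ideal.subset_span (by simp)))
  have hQ_le : (Q.height : WithBot ℕ∞) ≤ ringKrullDim R :=
    Ideal.height_le_ringKrullDim_of_ne_top Ideal.IsPrime.ne_top'
  have hQ_eq : (Q.height : WithBot ℕ∞) = ringKrullDim R :=
    le_antisymm hQ_le (hdim.trans (WithBot.coe_le_coe.2 hQ))
  have : FiniteRingKrullDim R := finiteRingKrullDim_iff_ne_bot_and_top.2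
    ⟨hQ_eq ▸ WithBot.coe_ne_bot, (hdim.trans_lt (WithBot.coe_lt_coe.2 (ENat.natCast_lt_top 2))).ne⟩
  have hQ_max : Q.IsMaximal := Ideal.isMaximal_of_height_eq_ringKrullDim hQ_eq
  rw [← Ideal.map_comap_of_surjective _ Ideal.Quotient.mk_surjective P]
  refine (Ideal.map_eq_top_or_isMaximal_of_surjective _ Ideal.Quotient.mk_surjective
    hQ_max).resolve_left ?_
  rw [Ideal.map_comap_of_surjective _ Ideal.Quotient.mk_surjective P]
  exact Ideal.IsPrime.ne_top'

end Noetherian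

section LaurentPolynomial

variable {R : Type*} [CommRing R] [IsArtinianRing R] {f g : AddMonoidAlgebra R (ℤ × ℤ)}

theorem finite_quotient (hfg : KoszulExact f g) :
    Module.Finite R (AddMonoidAlgebra R (ℤ × ℤ) ⧸ Ideal.span {f, g}) := by
  have hdim : ringKrullDim (AddMonoidAlgebra R (ℤ × ℤ)) ≤ 2 := by
    have hR : ringKrullDim R ≤ 0 := Ring.krullDimLE_iff.1 inferInstance
    calc ringKrullDim (AddMonoidAlgebra R (ℤ × ℤ))
        ≤ ringKrullDim R + 2 := ringKrullDim_addMonoidAlgebra_int_prod_int_le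
      _ ≤ 0 + 2 := by gcongr
      _ = 2 := zero_add 2
  exact (Module.finite_iff_krullDimLE_zero R _).2 (hfg.krullDimLE_zero_quotient hdim)

theorem free_quotient [IsLocalRing R] (hfg : KoszulExact f g) {d e : R}
    (hd : IsLocalRing.maximalIdeal R = Ideal.span {d}) (hde : IsExactPair d e) :
    Module.Free R (AddMonoidAlgebra R (ℤ × ℤ) ⧸ Ideal.span {f, g}) := by
  have := hfg.finite_quotient
  have := Module.finitePresentation_of_finite R (AddMonoidAlgebra R (ℤ × ℤ) ⧸ Ideal.span {f, g})
  refine free_of_forall_smul_eq_zero hd hde.mul_eq_zero fun x hx => ?_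
  obtain ⟨y, rfl⟩ := hfg.mk_dvd_of_mk_mul_eq_zero
    (hde.algebraMap_of_flat (AddMonoidAlgebra R (ℤ × ℤ))) ((Algebra.smul_def d x).symm.trans hx)
  exact ⟨y, (Algebra.smul_def e y).symm⟩

end LaurentPolynomial

end KoszulExact

section ZMod

variable {N d e : ℕ}

theorem dvd_of_natCast_mul_eq_zero_zmod [NeZero N] (hde : d * e = N) (c : ZMod N)
    (hc : (d : ZMod N) * c = 0) : (e : ZMod N) ∣ c := by
  have hd : 0 < d := Nat.pos_of_ne_zero (left_ne_zero_of_mul (hde ▸ NeZero.ne N))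
  obtain ⟨c, rfl⟩ := ZMod.natCast_zmod_surjective c
  rw [← Nat.cast_mul, ZMod.natCast_eq_zero_iff, ← hde] at hc
  exact Nat.cast_dvd_cast (Nat.dvd_of_mul_dvd_mul_left hd hc)

theorem isExactPair_natCast_zmod [NeZero N] (hde : d * e = N) :
    IsExactPair (d : ZMod N) (e : ZMod N) where
  mul_eq_zero := by rw [← Nat.cast_mul, hde, ZMod.natCast_self]
  dvd_of_left_mul_eq_zero := dvd_of_natCast_mul_eq_zero_zmod hde
  dvd_of_right_mul_eq_zero := dvd_of_natCast_mul_eq_zero_zmod (mul_comm d e ▸ hde)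

theorem ker_zmod_castHom (h : d ∣ N) :
    RingHom.ker (ZMod.castHom h (ZMod d)) = Ideal.span {(d : ZMod N)} := by
  apply le_antisymm
  · intro c hc
    obtain ⟨c, rfl⟩ := ZMod.intCast_surjective c
    rw [RingHom.mem_ker, map_intCast, ZMod.intCast_zmod_eq_zero_iff_dvd] at hc
    exact Ideal.mem_span_singleton.2 (by simpa using map_dvd (Int.castRingHom (ZMod N)) hc)
  · simp [RingHom.mem_ker]

theorem isLocalRing_zmod_prime_pow {p k : ℕ} [Fact p.Prime] (hk : k ≠ 0) :
    IsLocalRing (ZMod (p ^ k)) :=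
  have : Fact (1 < p ^ k) := ⟨Nat.one_lt_pow hk (Fact.out : p.Prime).one_lt⟩
  .of_surjective' (PadicInt.toZModPow (p := p) k) (ZMod.ringHom_surjective _)

theorem maximalIdeal_zmod_prime_pow {p k : ℕ} [Fact p.Prime] [IsLocalRing (ZMod (p ^ k))] :
    IsLocalRing.maximalIdeal (ZMod (p ^ k)) = Ideal.span {(p : ZMod (p ^ k))} := by
  have hk : k ≠ 0 := by
    rintro rfl
    exact not_subsingleton (ZMod (p ^ 0)) (by rw [pow_zero]; infer_instance)
  rw [← ker_zmod_castHom (dvd_pow_self p hk)]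
  exact (IsLocalRing.eq_maximalIdeal (RingHom.ker_isMaximal_of_surjective
    (ZMod.castHom _ (ZMod p)) (ZMod.castHom_surjective _))).symm

end ZMod

section Reduction

variable {N d : ℕ} (h : d ∣ N)

theorem red_eq_mapRingHom :
    red N d h = AddMonoidAlgebra.mapRingHom (ℤ × ℤ) (ZMod.castHom h (ZMod d)) := by
  ext <;> simp [red]

theorem red_surjective : Function.Surjective (red N d h) := by
  rw [red_eq_mapRingHom, AddMonoidAlgebra.coe_mapRingHom]
  exact AddMonoidAlgebra.map_surjective _ (ZMod.castHom_surjective h)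

theorem ker_red : RingHom.ker (red N d h) = Ideal.span {(d : RR N)} := by
  rw [red_eq_mapRingHom, ker_addMonoidAlgebra_mapRingHom, ker_zmod_castHom, Ideal.map_span,
    Set.image_singleton, map_natCast]

theorem red_red {m : ℕ} (hd : m ∣ d) (x : RR N) :
    red d m hd (red N d h x) = red N m (hd.trans h) x := by
  ext m
  simp only [red_eq_mapRingHom, AddMonoidAlgebra.coeff_mapRingHom]
  exact RingHom.congr_fun (RingHom.ext_zmod ((ZMod.castHom hd _).comp (ZMod.castHom h _)) _) _

theorem KoszulExact.map_red [NeZero N] {f g : RR N} (hfg : KoszulExact f g) :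
    KoszulExact (red N d h f) (red N d h g) := by
  obtain ⟨e, hde⟩ := h
  have := (isExactPair_natCast_zmod hde.symm).algebraMap_of_flat (RR N)
  exact hfg.map_of_ker_eq_span (by simpa using this) (red_surjective _) (ker_red _)

theorem map_red_span_pair (f g : RR N) :
    (Ideal.span {f, g}).map (red N d h) = Ideal.span {red N d h f, red N d h g} := by
  rw [Ideal.map_span, Set.image_pair]

/-- The map `R_N / (f, g) → R_d / (f_d, g_d)` induced by reduction modulo `d`. -/
noncomputable def redQuotient (f g : RR N) :
    RR N ⧸ Ideal.span {f, g} →+* RR d ⧸ Ideal.span {red N d h f, red N d h g} :=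
  Ideal.quotientMap _ (red N d h) (Ideal.map_le_iff_le_comap.1 (map_red_span_pair h f g).le)

theorem redQuotient_surjective (f g : RR N) : Function.Surjective (redQuotient h f g) :=
  Ideal.quotientMap_surjective (red_surjective h)

theorem ker_redQuotient (f g : RR N) :
    RingHom.ker (redQuotient h f g) = Ideal.span {(d : RR N ⧸ Ideal.span {f, g})} := by
  rw [redQuotient, ker_quotientMap_of_surjective (red_surjective h) (map_red_span_pair h f g),
    ker_red, Ideal.map_span, Set.image_singleton, map_natCast]

end Reduction

theorem KoszulExact.nonempty_addEquiv_pi_zmod_prime_pow {p k : ℕ} [Fact p.Prime] (hk : k ≠ 0)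
    {f g : RR (p ^ k)} (hfg : KoszulExact f g) :
    Nonempty (RR (p ^ k) ⧸ Ideal.span {f, g} ≃+
      (Fin (Module.finrank (ZMod p) (RR p ⧸ Ideal.span
        {red (p ^ k) p (dvd_pow_self p hk) f, red (p ^ k) p (dvd_pow_self p hk) g})) →
        ZMod (p ^ k))) := by
  have hp : p ∣ p ^ k := dvd_pow_self p hk
  have := isLocalRing_zmod_prime_pow (p := p) hk
  have hmax := maximalIdeal_zmod_prime_pow (p := p) (k := k)
  have := hfg.finite_quotient
  have := hfg.free_quotient hmax (isExactPair_natCast_zmod (mul_pow_sub_one hk p))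
  have hrank := finrank_eq_of_ker_eq_map_maximalIdeal (ZMod.castHom_surjective hp)
    (redQuotient_surjective hp f g) (RingHom.ext_zmod _ _) (by
      rw [ker_redQuotient, hmax, Ideal.map_span, Set.image_singleton, map_natCast])
  rw [hrank]
  exact ⟨(Module.finBasis _ _).equivFun.toAddEquiv⟩

theorem nonempty_ringEquiv_pi_quotient_prime_pow {A : Type*} [CommRing A] {N : ℕ} [NeZero N]
    (hNA : (N : A) = 0) :
    Nonempty (A ≃+* ((p : N.primeFactors) →
      A ⧸ Ideal.span {(((p : ℕ) ^ N.factorization p : ℕ) : A)})) := by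
  have hco : Pairwise fun p q : N.primeFactors =>
      ((p : ℕ) ^ N.factorization p).Coprime ((q : ℕ) ^ N.factorization q) := fun p q hpq =>
    Nat.coprime_pow_primes _ _ (Nat.prime_of_mem_primeFactors p.2)
      (Nat.prime_of_mem_primeFactors q.2) (fun h => hpq (Subtype.ext h))
  have hcop : Pairwise (Function.onFun IsCoprime fun p : N.primeFactors =>
      Ideal.span {(((p : ℕ) ^ N.factorization p : ℕ) : A)}) := fun p q hpq => by
    rw [Function.onFun, Ideal.isCoprime_span_singleton_iff]
    exact (hco hpq).cast
  have hinf : (⨅ p : N.primeFactors, Ideal.span {(((p : ℕ) ^ N.factorization p : ℕ) : A)}) = ⊥ := by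
    rw [Ideal.iInf_span_singleton_natCast hco, ← Ideal.span_singleton_eq_bot.2 hNA]
    congr 3
    rw [Finset.prod_coe_sort N.primeFactors (fun p => p ^ N.factorization p)]
    exact Nat.prod_factorization_pow_eq_self (NeZero.ne N)
  exact ⟨(RingEquiv.quotientBot A).symm.trans ((Ideal.quotEquivOfEq hinf.symm).trans
    (Ideal.quotientInfRingEquivPiQuotient _ hcop))⟩

theorem stmt2 (N : ℕ) (hN : 0 < N) (f g : RR N) (htopo : IsTopological f g) :
    Nonempty ((RR N ⧸ Ideal.span {f, g}) ≃+
      ((p : N.primeFactors) →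
        (Fin (Module.finrank (ZMod (p : ℕ))
            (RR (p : ℕ) ⧸ Ideal.span
              {red N (p : ℕ) (Nat.dvd_of_mem_primeFactors p.2) f,
               red N (p : ℕ) (Nat.dvd_of_mem_primeFactors p.2) g})) →
          ZMod ((p : ℕ) ^ N.factorization (p : ℕ))))) := by
  have : NeZero N := ⟨hN.ne'⟩
  have hfg : KoszulExact f g := htopo
  obtain ⟨crt⟩ := nonempty_ringEquiv_pi_quotient_prime_pow (A := RR N ⧸ Ideal.span {f, g}) (N := N)
    (by rw [← map_natCast (algebraMap (ZMod N) _), ZMod.natCast_self, map_zero])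
  refine ⟨crt.toAddEquiv.trans (AddEquiv.piCongrRight fun p => Nonempty.some ?_)⟩
  have : Fact (p : ℕ).Prime := ⟨Nat.prime_of_mem_primeFactors p.2⟩
  have hk : N.factorization p ≠ 0 := Finsupp.mem_support_iff.1 (by simp)
  have hd : (p : ℕ) ^ N.factorization p ∣ N := Nat.ordProj_dvd N p
  let reduction := (Ideal.quotEquivOfEq (ker_redQuotient hd f g).symm).trans
    (RingHom.quotientKerEquivOfSurjective (redQuotient_surjective hd f g))
  obtain ⟨e⟩ := (hfg.map_red hd).nonempty_addEquiv_pi_zmod_prime_pow hk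
  rw [red_red, red_red] at e
  exact ⟨reduction.toAddEquiv.trans e⟩
end

section
/- Let N be a positive integer, a an integer, and N_a the largest divisor of N coprime to a. Then there is an isomorphism of additive groups R_N ⧸ Ideal.span {(X − a)(X − 1), (Y − a)(Y − 1)} ≅ ZMod N × (ZMod N_a)³. (This identifies the electric anyon group of the Delfino–Chamon–You model; its full anyon fusion group is therefore (ZMod N)² × (ZMod N_a)⁶.) -/
/-- The monomial `X`. -/
noncomputable def Xv (N : ℕ) : RR N := AddMonoidAlgebra.single ((1 : ℤ), (0 : ℤ)) 1

/-- The monomial `Y`. -/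
noncomputable def Yv (N : ℕ) : RR N := AddMonoidAlgebra.single ((0 : ℤ), (1 : ℤ)) 1

/-!
Let `A` be any commutative ring, `a ∈ A`, and `B` the localization of `A` away from `a`. Modulo the
relations, `X` acts on multiples of `X - 1` as `a` does, and likewise for `Y`; since `X` and `Y` are
units, `a` becomes invertible on these multiples. The quotient is therefore
`A ⊕ B (X - 1) ⊕ B (Y - 1) ⊕ B (X - 1) (Y - 1)`: in these coordinates `X` and `Y` act by commuting
automorphisms satisfying the relations, for which `1` is a cyclic vector, and sending coordinates to
the corresponding combination inverts the orbit map of that vector. For `A = ZMod N` and `N_a` the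
largest divisor of `N` prime to `a`, a power of `a` is divisible by `N / N_a`, so `B = ZMod N_a`.
-/

section LaurentPolynomials

variable (A : Type*) [CommRing A]

/-- The monomial `X` of `A[X^{±1}, Y^{±1}]`, for an arbitrary coefficient ring `A`; thus `Xv N` is
`laurentX (ZMod N)`. -/
noncomputable def laurentX : AddMonoidAlgebra A (ℤ × ℤ) := AddMonoidAlgebra.single (1, 0) 1

/-- The monomial `Y` of `A[X^{±1}, Y^{±1}]`, for an arbitrary coefficient ring `A`; thus `Yv N` is
`laurentY (ZMod N)`. -/
noncomputable def laurentY : AddMonoidAlgebra A (ℤ × ℤ) := AddMonoidAlgebra.single (0, 1) 1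

theorem isUnit_laurentX : IsUnit (laurentX A) :=
  .of_mul_eq_one (AddMonoidAlgebra.single (-1, 0) 1) <| by
    simp [laurentX, AddMonoidAlgebra.single_mul_single, AddMonoidAlgebra.one_def, Prod.zero_eq_mk]

theorem isUnit_laurentY : IsUnit (laurentY A) :=
  .of_mul_eq_one (AddMonoidAlgebra.single (0, -1) 1) <| by
    simp [laurentY, AddMonoidAlgebra.single_mul_single, AddMonoidAlgebra.one_def, Prod.zero_eq_mk]

variable {A}

theorem laurentX_mul_single (i j : ℤ) (c : A) :
    laurentX A * AddMonoidAlgebra.single (i, j) c = AddMonoidAlgebra.single (i + 1, j) c := by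
  simp [laurentX, AddMonoidAlgebra.single_mul_single, add_comm]

theorem laurentY_mul_single (i j : ℤ) (c : A) :
    laurentY A * AddMonoidAlgebra.single (i, j) c = AddMonoidAlgebra.single (i, j + 1) c := by
  simp [laurentY, AddMonoidAlgebra.single_mul_single, add_comm]

theorem laurent_induction {motive : AddMonoidAlgebra A (ℤ × ℤ) → Prop}
    (algebraMap : ∀ c, motive (algebraMap A _ c))
    (add : ∀ p q, motive p → motive q → motive (p + q))
    (X_mul : ∀ p, motive (laurentX A * p) ↔ motive p)
    (Y_mul : ∀ p, motive (laurentY A * p) ↔ motive p) (p : AddMonoidAlgebra A (ℤ × ℤ)) :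
    motive p := by
  induction p using AddMonoidAlgebra.induction_linear with
  | zero => simpa using algebraMap 0
  | add p q hp hq => exact add p q hp hq
  | single ij c =>
    obtain ⟨i, j⟩ := ij
    have hX (i j : ℤ) : motive (.single (i + 1, j) c) ↔ motive (.single (i, j) c) := by
      rw [← laurentX_mul_single, X_mul]
    have hY (i j : ℤ) : motive (.single (i, j + 1) c) ↔ motive (.single (i, j) c) := by
      rw [← laurentY_mul_single, Y_mul]
    induction i using Int.induction_on with
    | zero =>
      induction j using Int.induction_on with
      | zero => exact algebraMap c
      | succ j ih => exact (hY 0 j).mpr ih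
      | pred j ih => exact (hY 0 (-j - 1)).mp (by rwa [sub_add_cancel])
    | succ i ih => exact (hX i j).mpr ih
    | pred i ih => exact (hX (-i - 1) j).mp (by rwa [sub_add_cancel])

variable {M : Type*} [AddCommGroup M] [Module A M] {f g : M ≃ₗ[A] M}

/-- The action of `A[X^{±1}, Y^{±1}]` on a module in which `X` and `Y` act through two given
commuting automorphisms `f` and `g`. -/
noncomputable def laurentAction (h : Commute f g) :
    AddMonoidAlgebra A (ℤ × ℤ) →ₐ[A] Module.End A M :=
  AddMonoidAlgebra.lift A _ (ℤ × ℤ) <|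
    (LinearEquiv.automorphismGroup.toLinearMapMonoidHom (R := A) (M := M)).comp
      { toFun := fun n => f ^ n.toAdd.1 * g ^ n.toAdd.2
        map_one' := by simp
        map_mul' := fun m n => by
          rw [toAdd_mul, Prod.fst_add, Prod.snd_add, zpow_add, zpow_add]
          exact (h.zpow_zpow _ _).mul_mul_mul_comm _ _ }

@[simp]
theorem laurentAction_laurentX (h : Commute f g) : laurentAction h (laurentX A) = f := by
  simp [laurentAction, laurentX]

@[simp]
theorem laurentAction_laurentY (h : Commute f g) : laurentAction h (laurentY A) = g := by
  simp [laurentAction, laurentY]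

theorem map_laurentAction (h : Commute f g) {L : Type*} [CommRing L] [Algebra A L]
    (q : AddMonoidAlgebra A (ℤ × ℤ) →ₐ[A] L) (ψ : M →ₗ[A] L)
    (hf : ∀ m, ψ (f m) = q (laurentX A) * ψ m) (hg : ∀ m, ψ (g m) = q (laurentY A) * ψ m)
    (p : AddMonoidAlgebra A (ℤ × ℤ)) (m : M) : ψ (laurentAction h p m) = q p * ψ m := by
  induction p using laurent_induction generalizing m with
  | algebraMap c =>
    rw [AlgHom.commutes, AlgHom.commutes, Module.algebraMap_end_apply, map_smul, Algebra.smul_def]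
  | add p p' hp hp' => simp [hp, hp', add_mul]
  | X_mul p => simp [hf, mul_assoc, ((isUnit_laurentX A).map q).mul_right_inj]
  | Y_mul p => simp [hg, mul_assoc, ((isUnit_laurentY A).map q).mul_right_inj]

end LaurentPolynomials

section Combination

variable {A B L : Type*} [CommRing A] [CommRing B] [CommRing L] [Algebra A B] [Algebra A L]
  {a : A} {x y : L}

-- `(x - a) * (y - a)` kills `x - 1` and `y - 1`, so coefficients matter only modulo it.
theorem exists_linearMap_eq_combination
    (hx : (x - algebraMap A L a) * (x - 1) = 0) (hy : (y - algebraMap A L a) * (y - 1) = 0)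
    (g : B →ₐ[A] L ⧸ Ideal.span {(x - algebraMap A L a) * (y - algebraMap A L a)}) :
    ∃ ψ : ((A × B) × B × B) →ₗ[A] L, ∀ (r : A) {s t w : B} {s' t' w' : L},
      Ideal.Quotient.mk _ s' = g s → Ideal.Quotient.mk _ t' = g t → Ideal.Quotient.mk _ w' = g w →
        ψ ((r, s), (t, w)) =
          algebraMap A L r + s' * (x - 1) + t' * (y - 1) + w' * ((x - 1) * (y - 1)) := by
  let β (z : L) (hz : (x - algebraMap A L a) * (y - algebraMap A L a) * z = 0) : B →ₗ[A] L :=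
    (Submodule.liftQSpanSingleton _ (LinearMap.toSpanSingleton L L z) hz).restrictScalars A ∘ₗ
      g.toLinearMap
  have β_apply {z hz b l} (h : Ideal.Quotient.mk _ l = g b) : β z hz b = l * z := by
    simp only [β, LinearMap.comp_apply, AlgHom.toLinearMap_apply, ← h]
    rfl
  let βω := β (x - 1) (by linear_combination (y - algebraMap A L a) * hx)
  let βη := β (y - 1) (by linear_combination (x - algebraMap A L a) * hy)
  let βωη := β ((x - 1) * (y - 1))
    (by linear_combination (y - algebraMap A L a) * (y - 1) * hx)
  refine ⟨((Algebra.linearMap A L).coprod βω).coprod (βη.coprod βωη), ?_⟩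
  intro r _ _ _ _ _ _ hs ht hw
  simp only [LinearMap.coprod_apply, Algebra.linearMap_apply, βω, βη, βωη, β_apply hs, β_apply ht,
    β_apply hw]
  ring

end Combination

section Localization

variable {A B : Type*} [CommRing A] [CommRing B] [Algebra A B] {a : A} [IsLocalization.Away a B]

theorem submodule_eq_top_of_one_mem_of_smul_mem {N : Submodule A B} (h_one : 1 ∈ N)
    (h_smul : ∀ b, a • b ∈ N → b ∈ N) : N = ⊤ := by
  refine eq_top_iff.mpr fun b _ => ?_
  obtain ⟨n, r, hr⟩ := IsLocalization.Away.surj a b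
  have hb : a ^ n • b ∈ N := by
    rw [Algebra.smul_def, map_pow, mul_comm, hr, Algebra.algebraMap_eq_smul_one]
    exact N.smul_mem r h_one
  clear hr
  induction n with
  | zero => simpa using hb
  | succ n ih => exact ih (h_smul _ (by rwa [smul_smul, ← pow_succ']))

variable (a B)

/-- Multiplication by `a` as an automorphism of the localization `B` of `A` away from `a`. -/
noncomputable def awayScaling : B ≃ₗ[A] B :=
  DistribMulAction.toLinearEquiv A B (IsLocalization.Away.algebraMap_isUnit (S := B) a).unit

variable {B} in
@[simp]
theorem awayScaling_apply (b : B) : awayScaling B a b = a • b := by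
  simp [awayScaling, Units.smul_def, Algebra.smul_def]

/-- Multiplication by `X` modulo the relations, where `((r, s), (t, w))` are the coordinates of
`r + s (X - 1) + t (Y - 1) + w (X - 1) (Y - 1)`. -/
noncomputable def shearX : ((A × B) × B × B) ≃ₗ[A] (A × B) × B × B :=
  ((LinearEquiv.refl A A).skewProd (awayScaling B a) (Algebra.linearMap A B)).prodCongr
    ((LinearEquiv.refl A B).skewProd (awayScaling B a) LinearMap.id)

/-- Multiplication by `Y` modulo the relations, in the same coordinates as for `shearX`. -/
noncomputable def shearY : ((A × B) × B × B) ≃ₗ[A] (A × B) × B × B :=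
  (LinearEquiv.refl A (A × B)).skewProd ((awayScaling B a).prodCongr (awayScaling B a))
    ((Algebra.linearMap A B).prodMap LinearMap.id)

variable {B} in
@[simp]
theorem shearX_apply (m : (A × B) × B × B) : shearX B a m =
    ((m.1.1, a • m.1.2 + algebraMap A B m.1.1), (m.2.1, a • m.2.2 + m.2.1)) := by
  simp [shearX]

variable {B} in
@[simp]
theorem shearY_apply (m : (A × B) × B × B) : shearY B a m =
    (m.1, (a • m.2.1 + algebraMap A B m.1.1, a • m.2.2 + m.1.2)) := by
  simp [shearY]

theorem commute_shearX_shearY : Commute (shearX B a) (shearY B a) := by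
  ext ⟨⟨r, s⟩, t, w⟩ <;> simp [Algebra.smul_def, mul_add, add_assoc, add_left_comm]

theorem eq_top_of_mem_of_shearX_mem_iff_of_shearY_mem_iff {K : Submodule A ((A × B) × B × B)}
    (h_one : ((1, 0), 0) ∈ K) (hX : ∀ m, shearX B a m ∈ K ↔ m ∈ K)
    (hY : ∀ m, shearY B a m ∈ K ↔ m ∈ K) : K = ⊤ := by
  have mem_of_one_mem (ι : B →ₗ[A] (A × B) × B × B) (h_one : ι 1 ∈ K)
      (h_smul : ∀ b, ι (a • b) ∈ K → ι b ∈ K) (b : B) : ι b ∈ K :=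
    (submodule_eq_top_of_one_mem_of_smul_mem (N := K.comap ι) h_one h_smul).ge Submodule.mem_top
  have h₁ (r : A) : ((r, 0), 0) ∈ K := by simpa using K.smul_mem r h_one
  have hω (s : B) : ((0, s), 0) ∈ K := by
    refine mem_of_one_mem (LinearMap.inl A (A × B) (B × B) ∘ₗ LinearMap.inr A A B) ?_ ?_ s
    · simpa using! K.sub_mem ((hX _).mpr h_one) h_one
    · exact fun b hb => (hX _).mp (by simpa using! hb)
  have hη (t : B) : (0, (t, 0)) ∈ K := by
    refine mem_of_one_mem (LinearMap.inr A (A × B) (B × B) ∘ₗ LinearMap.inl A B B) ?_ ?_ t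
    · simpa using! K.sub_mem ((hY _).mpr h_one) h_one
    · exact fun b hb => (hY _).mp (by simpa using! hb)
  have hωη (w : B) : (0, (0, w)) ∈ K := by
    refine mem_of_one_mem (LinearMap.inr A (A × B) (B × B) ∘ₗ LinearMap.inr A B B) ?_ ?_ w
    · simpa using! K.sub_mem ((hX _).mpr (hη 1)) (hη 1)
    · exact fun b hb => (hX _).mp (by simpa using! hb)
  refine eq_top_iff.mpr fun ⟨⟨r, s⟩, t, w⟩ _ => ?_
  simpa using K.add_mem (K.add_mem (h₁ r) (hω s)) (K.add_mem (hη t) (hωη w))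

theorem surjective_laurentAction_shear_apply :
    Function.Surjective fun p => laurentAction (commute_shearX_shearY B a) p ((1, 0), 0) := by
  let φ := laurentAction (commute_shearX_shearY B a)
  let K := LinearMap.range (LinearMap.applyₗ ((1, 0), 0) ∘ₗ φ.toLinearMap)
  have apply_mem (p) {m} (hm : m ∈ K) : φ p m ∈ K := by
    obtain ⟨p', rfl⟩ := hm
    exact ⟨p * p', by simp⟩
  have apply_mem_iff {u} (hu : IsUnit u) (m) : φ u m ∈ K ↔ m ∈ K := by
    refine ⟨fun h => ?_, apply_mem u⟩
    obtain ⟨v, hv⟩ := hu.exists_left_inv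
    simpa [← Module.End.mul_apply, ← map_mul, hv] using apply_mem v h
  have hK : K = ⊤ := by
    refine eq_top_of_mem_of_shearX_mem_iff_of_shearY_mem_iff B a ⟨1, by simp⟩ ?_ ?_
    · simpa [φ] using apply_mem_iff (isUnit_laurentX A)
    · simpa [φ] using apply_mem_iff (isUnit_laurentY A)
  exact LinearMap.range_eq_top.mp hK

/-- The ideal of `A[X^{±1}, Y^{±1}]` generated by the two relations of the Delfino–Chamon–You
model. -/
noncomputable def relationIdeal : Ideal (AddMonoidAlgebra A (ℤ × ℤ)) :=
  Ideal.span {(laurentX A - algebraMap A _ a) * (laurentX A - 1),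
    (laurentY A - algebraMap A _ a) * (laurentY A - 1)}

theorem laurentAction_shear_eq_zero_of_mem_relationIdeal {p : AddMonoidAlgebra A (ℤ × ℤ)}
    (hp : p ∈ relationIdeal a) : laurentAction (commute_shearX_shearY B a) p = 0 := by
  suffices relationIdeal a ≤ RingHom.ker (laurentAction (commute_shearX_shearY B a)) from this hp
  rw [relationIdeal, Ideal.span_le]
  rintro _ (rfl | rfl) <;>
    exact LinearMap.ext fun ⟨⟨r, s⟩, t, w⟩ => by
      simp [Algebra.smul_def, -AddMonoidAlgebra.coe_algebraMap, AlgHom.commutes]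

section Intertwining

variable {L : Type*} [CommRing L] [Algebra A L] {x y : L}

-- Modulo `(x - a) * (y - a)`, the unit `x * y` is a multiple of `a`.
theorem nonempty_algHom_quotient_span_sub_mul_sub (hx : IsUnit x) (hy : IsUnit y) :
    Nonempty (B →ₐ[A] L ⧸ Ideal.span {(x - algebraMap A L a) * (y - algebraMap A L a)}) := by
  let π := Ideal.Quotient.mk (Ideal.span {(x - algebraMap A L a) * (y - algebraMap A L a)})
  have hdvd : π (algebraMap A L a) ∣ π (x * y) := by
    refine ⟨π (x + y - algebraMap A L a), ?_⟩
    rw [← map_mul, Ideal.Quotient.mk_eq_mk_iff_sub_mem, Ideal.mem_span_singleton]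
    exact ⟨1, by ring⟩
  have ha : IsUnit (Algebra.ofId A (L ⧸ _) a) := isUnit_of_dvd_unit hdvd ((hx.mul hy).map π)
  exact ⟨IsLocalization.Away.liftAlgHom a ha⟩

theorem exists_linearMap_intertwining_shear (hx_unit : IsUnit x) (hy_unit : IsUnit y)
    (hx : (x - algebraMap A L a) * (x - 1) = 0) (hy : (y - algebraMap A L a) * (y - 1) = 0) :
    ∃ ψ : ((A × B) × B × B) →ₗ[A] L, ψ ((1, 0), 0) = 1 ∧
      (∀ m, ψ (shearX B a m) = x * ψ m) ∧ ∀ m, ψ (shearY B a m) = y * ψ m := by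
  obtain ⟨g⟩ := nonempty_algHom_quotient_span_sub_mul_sub B a hx_unit hy_unit
  obtain ⟨ψ, hψ⟩ := exists_linearMap_eq_combination hx hy g
  choose lift mk_lift using fun b => Ideal.Quotient.mk_surjective (g b)
  have mk_smul_add {b c l k} (hb : Ideal.Quotient.mk _ l = g b) (hc : Ideal.Quotient.mk _ k = g c) :
      Ideal.Quotient.mk _ (algebraMap A L a * l + k) = g (a • b + c) := by
    rw [map_add, map_mul, hb, hc, map_add, map_smul, Algebra.smul_def]
    rfl
  have mk_algebraMap (r : A) : Ideal.Quotient.mk _ (algebraMap A L r) = g (algebraMap A B r) :=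
    (g.commutes r).symm
  have mk_zero : Ideal.Quotient.mk _ 0 = g 0 := by simp
  refine ⟨ψ, ?_, ?_, ?_⟩
  · simpa using! hψ 1 mk_zero mk_zero mk_zero
  · rintro ⟨⟨r, s⟩, t, w⟩
    rw [shearX_apply, hψ r (mk_lift s) (mk_lift t) (mk_lift w),
      hψ r (mk_smul_add (mk_lift s) (mk_algebraMap r)) (mk_lift t)
        (mk_smul_add (mk_lift w) (mk_lift t))]
    linear_combination -(lift s + lift w * (y - 1)) * hx
  · rintro ⟨⟨r, s⟩, t, w⟩
    rw [shearY_apply, hψ r (mk_lift s) (mk_lift t) (mk_lift w),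
      hψ r (mk_lift s) (mk_smul_add (mk_lift t) (mk_algebraMap r))
        (mk_smul_add (mk_lift w) (mk_lift s))]
    linear_combination -(lift t + lift w * (x - 1)) * hy

end Intertwining

theorem stmt12_general :
    Nonempty ((AddMonoidAlgebra A (ℤ × ℤ) ⧸ relationIdeal a) ≃ₗ[A] A × B × B × B) := by
  let q := Ideal.Quotient.mkₐ A (relationIdeal a)
  have relation {z} (hz : (z - algebraMap A _ a) * (z - 1) ∈ relationIdeal a) :
      (q z - algebraMap A _ a) * (q z - 1) = 0 :=
    Ideal.Quotient.eq_zero_iff_mem.mpr hz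
  obtain ⟨ψ, hψ_one, hψX, hψY⟩ := exists_linearMap_intertwining_shear B a
    ((isUnit_laurentX A).map q) ((isUnit_laurentY A).map q)
    (relation (Ideal.subset_span (by simp))) (relation (Ideal.subset_span (by simp)))
  have hψ (p) : ψ (laurentAction (commute_shearX_shearY B a) p ((1, 0), 0)) = q p := by
    rw [map_laurentAction _ q ψ hψX hψY, hψ_one, mul_one]
  have injective : Function.Injective ψ := by
    refine (injective_iff_map_eq_zero ψ).mpr fun m hm => ?_
    obtain ⟨p, rfl⟩ := surjective_laurentAction_shear_apply B a m
    have hp : p ∈ relationIdeal a := Ideal.Quotient.eq_zero_iff_mem.mp ((hψ p).symm.trans hm)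
    simp [laurentAction_shear_eq_zero_of_mem_relationIdeal B a hp]
  have surjective : Function.Surjective ψ := fun l =>
    let ⟨p, hp⟩ := Ideal.Quotient.mk_surjective l
    ⟨_, (hψ p).trans hp⟩
  exact ⟨(LinearEquiv.ofBijective ψ ⟨injective, surjective⟩).symm ≪≫ₗ
    LinearEquiv.prodAssoc A A B (B × B)⟩

end Localization

section ZMod

variable {n m : ℕ} {a : ℤ}

theorem exists_dvd_mul_pow_of_maximal_coprime_divisor (hn : 0 < n) (hdvd : m ∣ n)
    (hcop : IsCoprime (m : ℤ) a) (hmax : ∀ d : ℕ, d ∣ n → IsCoprime (d : ℤ) a → d ≤ m) :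
    ∃ k : ℕ, (n : ℤ) ∣ m * a ^ k := by
  obtain ⟨c, rfl⟩ := hdvd
  have hm : 0 < m := Nat.pos_of_mul_pos_right hn
  have hc : c ≠ 0 := (Nat.pos_of_mul_pos_left hn).ne'
  have prime_dvd {p : ℕ} (hp : p.Prime) (hpc : p ∣ c) : p ∣ a.natAbs := by
    refine Int.natCast_dvd.mp (by_contra fun hpa => ?_)
    have hpa : IsCoprime (p : ℤ) a := (Nat.prime_iff_prime_int.mp hp).coprime_iff_not_dvd.mpr hpa
    have hle : m * p ≤ m :=
      hmax (m * p) (mul_dvd_mul_left m hpc) (by exact_mod_cast hcop.mul_left hpa)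
    exact hp.one_lt.not_ge (le_of_mul_le_mul_left (by simpa using hle) hm)
  have radical_dvd : UniqueFactorizationMonoid.radical c ∣ a.natAbs := by
    rw [Nat.radical_eq_prod_primeFactors]
    exact Finset.prod_primes_dvd _ (fun p hp => (Nat.prime_of_mem_primeFactors hp).prime)
      fun p hp => prime_dvd (Nat.prime_of_mem_primeFactors hp) (Nat.dvd_of_mem_primeFactors hp)
  obtain ⟨k, hk⟩ := (UniqueFactorizationMonoid.exists_dvd_pow_iff_radical_dvd hc).mpr radical_dvd
  refine ⟨k, ?_⟩
  rw [Nat.cast_mul]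
  exact mul_dvd_mul_left _ (by rwa [Int.natCast_dvd, Int.natAbs_pow])

theorem isLocalization_away_zmod [Algebra (ZMod n) (ZMod m)] {k : ℕ} (hcop : IsCoprime (m : ℤ) a)
    (hdvd : (n : ℤ) ∣ m * a ^ k) : IsLocalization.Away (a : ZMod n) (ZMod m) := by
  refine IsLocalization.Away.of_surjective (ZMod.ringHom_surjective _) ?_ k ?_
  · rwa [map_intCast, ZMod.coe_int_isUnit_iff_isCoprime]
  · rintro _ ⟨r, hr, rfl⟩
    obtain ⟨r, rfl⟩ := ZMod.intCast_surjective r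
    have hmr : (m : ℤ) ∣ r := by simpa [ZMod.intCast_zmod_eq_zero_iff_dvd] using hr
    have hnr : (n : ℤ) ∣ a ^ k * r := hdvd.trans (by rw [mul_comm]; gcongr)
    simpa using (ZMod.intCast_zmod_eq_zero_iff_dvd _ n).mpr hnr

end ZMod

/-- The electric anyon group of the Delfino–Chamon–You model
`BB_N((X-a)(X-1), (Y-a)(Y-1))` is `ZMod N × (ZMod N_a)³`. -/
theorem stmt12 (N : ℕ) (hN : 0 < N) (a : ℤ) (Na : ℕ)
    (hNa_dvd : Na ∣ N) (hNa_cop : IsCoprime (Na : ℤ) a)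
    (hNa_max : ∀ d : ℕ, d ∣ N → IsCoprime ((d : ℤ)) a → d ≤ Na) :
    Nonempty ((RR N ⧸ Ideal.span
        {(Xv N - (a : RR N)) * (Xv N - 1), (Yv N - (a : RR N)) * (Yv N - 1)}) ≃+
      (ZMod N × ZMod Na × ZMod Na × ZMod Na)) := by
  let := (ZMod.castHom hNa_dvd (ZMod Na)).toAlgebra
  obtain ⟨k, hk⟩ := exists_dvd_mul_pow_of_maximal_coprime_divisor hN hNa_dvd hNa_cop hNa_max
  have := isLocalization_away_zmod hNa_cop hk
  obtain ⟨e⟩ := stmt12_general (ZMod Na) (a : ZMod N)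
  rw [relationIdeal, map_intCast] at e
  exact ⟨e.toAddEquiv⟩
end
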